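/- Let Ω be a nonempty finite set, p a full-support probability vector on Ω, n ≥ 1, and for each ω ∈ Ω let v^ω : Δ(Ω)^n → ℝ be bounded and upper semicontinuous. Then the value Val of the persuasion problem equals the infimum of ∑_{ω∈Ω} p(ω)·V^ω over all real numbers V^ω (ω ∈ Ω) and continuous functions φ_i^ω : Δ(Ω) → ℝ (i ∈ {1,…,n}, ω ∈ Ω) satisfying (a) v^ω(x_1,…,x_n) ≤ V^ω + ∑_{i=1}^n φ_i^ω(x_i) for all (x_1,…,x_n) ∈ Δ(Ω)^n and all ω ∈ Ω, and (b) ∑_{ω∈Ω} x(ω)·φ_i^ω(x) = 0 for all x ∈ Δ(Ω) and all i. -/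

import Mathlib

open MeasureTheory

noncomputable section

abbrev Belief (Ω : Type) [Fintype Ω] : Type := stdSimplex ℝ Ω

variable {Ω : Type} [Fintype Ω] [MeasurableSpace Ω] [MeasurableSingletonClass Ω]

/-- The joint distribution of state and beliefs. -/
def jointP (p : Ω → ℝ) {X : Type} [MeasurableSpace X] (μ : Ω → Measure X) :
    Measure (Ω × X) :=
  ∑ ω : Ω, ENNReal.ofReal (p ω) • ((Measure.dirac ω).prod (μ ω))

/-- Feasibility of a collection of conditional belief distributions, n receivers. -/
def Feasible (p : Ω → ℝ) (n : ℕ) (μ : Ω → Measure (Fin n → Belief Ω)) : Prop :=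
  (∀ ω, IsProbabilityMeasure (μ ω)) ∧
  ∀ (i : Fin n) (ω' : Ω),
    (fun z : Ω × (Fin n → Belief Ω) => (z.2 i).1 ω')
      =ᵐ[jointP p μ]
      (jointP p μ)[Set.indicator {z : Ω × (Fin n → Belief Ω) | z.1 = ω'} (fun _ => (1 : ℝ)) |
        MeasurableSpace.comap (fun z : Ω × (Fin n → Belief Ω) => z.2 i) inferInstance]

/-- Feasibility of a collection of conditional belief distributions, single receiver. -/
def Feasible1 (p : Ω → ℝ) (lam : Ω → Measure (Belief Ω)) : Prop :=
  (∀ ω, IsProbabilityMeasure (lam ω)) ∧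
  ∀ ω' : Ω,
    (fun z : Ω × Belief Ω => (z.2).1 ω')
      =ᵐ[jointP p lam]
      (jointP p lam)[Set.indicator {z : Ω × Belief Ω | z.1 = ω'} (fun _ => (1 : ℝ)) |
        MeasurableSpace.comap (fun z : Ω × Belief Ω => z.2) inferInstance]

/-- the value of the persuasion problem -/
def Val (p : Ω → ℝ) (n : ℕ) (v : Ω → (Fin n → Belief Ω) → ℝ) : ℝ :=
  sSup { r | ∃ μ : Ω → Measure (Fin n → Belief Ω),
    Feasible p n μ ∧ r = ∑ ω : Ω, p ω * ∫ x, v ω x ∂(μ ω) }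

end

open Filter Topology in
lemma usc_approx {X : Type} [PseudoMetricSpace X] [Nonempty X] (v : X → ℝ) (C : ℝ)
    (hC : ∀ x, |v x| ≤ C) (hv : UpperSemicontinuous v) :
    ∃ g : ℕ → C(X, ℝ), (∀ k x, v x ≤ g k x) ∧ (∀ k x, |g k x| ≤ C) ∧
      ∀ x, Tendsto (fun k => g k x) atTop (𝓝 (v x)) := by
  have hub : ∀ (k : ℕ) (x y : X), v y - k * dist x y ≤ C := by
    intro k x y
    have h1 := (abs_le.1 (hC y)).2
    have h2 : 0 ≤ (k : ℝ) * dist x y := by positivity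
    linarith
  have hbdd : ∀ (k : ℕ) (x : X), BddAbove (Set.range fun y => v y - k * dist x y) := by
    rintro k x
    refine ⟨C, ?_⟩
    rintro _ ⟨y, rfl⟩
    exact hub k x y
  have hlip : ∀ k : ℕ, LipschitzWith (k : NNReal) (fun x => ⨆ y, v y - k * dist x y) := by
    intro k
    refine LipschitzWith.of_le_add_mul _ fun x x' => ?_
    refine ciSup_le fun y => ?_
    have h1 := le_ciSup (hbdd k x') y
    have h2 := dist_triangle x' x y
    rw [dist_comm x' x] at h2
    have h3 : (k : ℝ) * dist x' y ≤ k * (dist x x' + dist x y) := by gcongr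
    simp only [NNReal.coe_natCast] at *
    linarith
  have hle : ∀ (k : ℕ) x, v x ≤ ⨆ y, v y - k * dist x y := by
    intro k x
    have := le_ciSup (hbdd k x) x
    simpa using this
  refine ⟨fun k => ⟨_, (hlip k).continuous⟩, hle, ?_, ?_⟩
  · intro k x
    refine abs_le.2 ⟨(abs_le.1 (hC x)).1.trans (hle k x), ciSup_le (hub k x)⟩
  · intro x
    refine tendsto_order.2 ⟨fun a ha => Eventually.of_forall fun k => ha.trans_le (hle k x), ?_⟩
    intro a ha
    obtain ⟨b, hb1, hb2⟩ := exists_between ha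
    obtain ⟨δ, hδ, h⟩ := Metric.eventually_nhds_iff.1 (hv x b hb1)
    obtain ⟨K, hK⟩ := exists_nat_gt (2 * C / δ)
    filter_upwards [eventually_ge_atTop K] with k hk
    refine lt_of_le_of_lt (ciSup_le fun y => ?_) hb2
    by_cases hy : dist y x < δ
    · have h2 : 0 ≤ (k : ℝ) * dist x y := by positivity
      have := h hy
      linarith
    · push Not at hy
      rw [dist_comm] at hy
      have h0 : (K : ℝ) ≤ k := by exact_mod_cast hk
      have h3 : (K : ℝ) * δ ≤ k * dist x y := by gcongr
      rw [div_lt_iff₀ hδ] at hK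
      have h1 := (abs_le.1 (hC y)).2
      have h4 := (abs_le.1 (hC x)).1
      linarith

lemma riesz_prob {X : Type} [TopologicalSpace X] [CompactSpace X] [T2Space X]
    [MeasurableSpace X] [BorelSpace X] (L : C(X, ℝ) →ₗ[ℝ] ℝ) (hL : ∀ f, 0 ≤ f → 0 ≤ L f)
    (hL1 : L 1 = 1) : ∃ μ : Measure X, IsProbabilityMeasure μ ∧ ∀ f : C(X, ℝ), ∫ x, f x ∂μ = L f := by
  let Λ0 : CompactlySupportedContinuousMap X ℝ →ₗ[ℝ] ℝ :=
    { toFun := fun f => L f.toContinuousMap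
      map_add' := fun f g => by
        rw [← map_add]; rfl
      map_smul' := fun c f => by
        rw [← map_smul]; rfl }
  let Λ : CompactlySupportedContinuousMap X ℝ →ₚ[ℝ] ℝ := PositiveLinearMap.mk₀ Λ0
    (fun f hf => hL _ hf)
  have key : ∀ f : C(X, ℝ), ∫ x, f x ∂(RealRMK.rieszMeasure Λ) = L f := fun f =>
    RealRMK.integral_rieszMeasure Λ (CompactlySupportedContinuousMap.continuousMapEquiv f)
  refine ⟨RealRMK.rieszMeasure Λ, ⟨?_⟩, key⟩
  have h1 := key 1
  rw [hL1] at h1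
  simp [Measure.real] at h1
  rw [ENNReal.toReal_eq_one_iff] at h1
  exact h1

lemma hahn_banach_point {E : Type} [AddCommGroup E] [Module ℝ E] (N : E → ℝ)
    (hom : ∀ c : ℝ, 0 < c → ∀ x, N (c • x) = c * N x) (hadd : ∀ x y, N (x + y) ≤ N x + N y)
    (x₀ : E) (hx₀ : x₀ ≠ 0) : ∃ L : E →ₗ[ℝ] ℝ, (∀ x, L x ≤ N x) ∧ L x₀ = N x₀ := by
  have h0 : N 0 = 0 := by
    have := hom 2 (by norm_num) 0
    rw [smul_zero] at this; linarith
  obtain ⟨L, h1, h2⟩ := exists_extension_of_le_sublinear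
    (LinearPMap.mkSpanSingleton (K := ℝ) x₀ (N x₀) hx₀) N hom hadd (by
      rintro ⟨x, hx⟩
      obtain ⟨t, rfl⟩ := Submodule.mem_span_singleton.1 hx
      have e : (LinearPMap.mkSpanSingleton (K := ℝ) x₀ (N x₀) hx₀) ⟨t • x₀, hx⟩ = t * N x₀ :=
        LinearPMap.mkSpanSingleton'_apply _ _ _ _ _
      refine e.trans_le ?_
      show t * N x₀ ≤ N (t • x₀)
      rcases lt_trichotomy t 0 with ht | rfl | ht
      · have a := hadd (t • x₀) ((-t) • x₀)
        rw [← add_smul, add_neg_cancel, zero_smul, h0, hom (-t) (by linarith)] at a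
        linarith
      · simp [h0]
      · rw [hom t ht])
  refine ⟨L, h2, ?_⟩
  have := h1 ⟨x₀, Submodule.mem_span_singleton_self x₀⟩
  simp only at this
  rw [this]
  exact LinearPMap.mkSpanSingleton_apply ℝ _ hx₀ _

lemma integral_map_withDensity {Z Y : Type} [MeasurableSpace Z] [MeasurableSpace Y]
    (P : Measure Z) (T : Z → Y) (hT : Measurable T) (w : Z → ℝ) (hw : Measurable w)
    (hw0 : ∀ z, 0 ≤ w z) (f : Y → ℝ) (hf : Measurable f) :
    ∫ y, f y ∂((P.withDensity fun z => ENNReal.ofReal (w z)).map T) = ∫ z, w z * f (T z) ∂P := by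
  rw [integral_map hT.aemeasurable hf.aestronglyMeasurable,
    integral_withDensity_eq_integral_toReal_smul hw.ennreal_ofReal (by simp)]
  simp [ENNReal.toReal_ofReal (hw0 _)]

lemma condExp_of_continuous {Z Y : Type} [MeasurableSpace Z] [MeasurableSpace Y]
    [TopologicalSpace Y] [BorelSpace Y] [HasOuterApproxClosed Y]
    (P : Measure Z) [IsFiniteMeasure P] (T : Z → Y) (hT : Measurable T) (w₁ w₂ : Z → ℝ)
    (hw₁ : Measurable w₁) (hw₂ : Measurable w₂)
    (h1 : ∀ z, 0 ≤ w₁ z) (h1' : ∀ z, w₁ z ≤ 1) (h2 : ∀ z, 0 ≤ w₂ z) (h2' : ∀ z, w₂ z ≤ 1)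
    (hw₂T : Measurable[MeasurableSpace.comap T inferInstance] w₂)
    (H : ∀ f : Y → ℝ, Continuous f → (∃ C, ∀ y, |f y| ≤ C) →
      ∫ z, w₁ z * f (T z) ∂P = ∫ z, w₂ z * f (T z) ∂P) :
    w₂ =ᵐ[P] P[w₁ | MeasurableSpace.comap T inferInstance] := by
  have i1 : Integrable w₁ P := Integrable.of_bound hw₁.aestronglyMeasurable 1
    (Filter.Eventually.of_forall fun z => by rw [Real.norm_eq_abs, abs_of_nonneg (h1 z)]; exact h1' z)
  have i2 : Integrable w₂ P := Integrable.of_bound hw₂.aestronglyMeasurable 1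
    (Filter.Eventually.of_forall fun z => by rw [Real.norm_eq_abs, abs_of_nonneg (h2 z)]; exact h2' z)
  have f1 : IsFiniteMeasure (P.withDensity fun z => ENNReal.ofReal (w₁ z)) :=
    isFiniteMeasure_withDensity_ofReal i1.2
  have f2 : IsFiniteMeasure (P.withDensity fun z => ENNReal.ofReal (w₂ z)) :=
    isFiniteMeasure_withDensity_ofReal i2.2
  have e : (P.withDensity fun z => ENNReal.ofReal (w₁ z)).map T =
      (P.withDensity fun z => ENNReal.ofReal (w₂ z)).map T := by
    refine ext_of_forall_integral_eq_of_IsFiniteMeasure fun f => ?_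
    rw [integral_map_withDensity P T hT w₁ hw₁ h1 _ f.continuous.measurable,
      integral_map_withDensity P T hT w₂ hw₂ h2 _ f.continuous.measurable]
    exact H f f.continuous ⟨‖f‖, fun y => f.norm_coe_le_norm y⟩
  refine ae_eq_condExp_of_forall_setIntegral_eq hT.comap_le i1 (fun s _ _ => i2.integrableOn) ?_
    hw₂T.stronglyMeasurable.aestronglyMeasurable
  rintro s ⟨B, hB, rfl⟩ -
  have a1 := integral_map_withDensity P T hT w₁ hw₁ h1 (B.indicator fun _ => 1)
    (measurable_const.indicator hB)
  have a2 := integral_map_withDensity P T hT w₂ hw₂ h2 (B.indicator fun _ => 1)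
    (measurable_const.indicator hB)
  have b : ∀ w : Z → ℝ, (fun z => w z * B.indicator (fun _ => (1 : ℝ)) (T z)) =
      (T ⁻¹' B).indicator w := by
    intro w
    ext z
    by_cases hz : T z ∈ B
    · simp [Set.indicator, hz]
    · simp [Set.indicator, hz]
  rw [b] at a1 a2
  rw [← integral_indicator (hT hB), ← integral_indicator (hT hB), ← a1, ← a2, e]

lemma isFiniteMeasure_jointP {Ω : Type} [Fintype Ω] [MeasurableSpace Ω]
    (p : Ω → ℝ) {X : Type} [MeasurableSpace X] (μ : Ω → Measure X)
    (hμ : ∀ ω, IsProbabilityMeasure (μ ω)) : IsFiniteMeasure (jointP p μ) := by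
  have : ∀ ω, IsFiniteMeasure (ENNReal.ofReal (p ω) • ((Measure.dirac ω).prod (μ ω))) :=
    fun ω => Measure.smul_finite _ (by simp)
  unfold jointP
  infer_instance

lemma integral_jointP {Ω : Type} [Fintype Ω] [MeasurableSpace Ω] [MeasurableSingletonClass Ω]
    (p : Ω → ℝ) (hp : ∀ ω, 0 < p ω) {X : Type} [MeasurableSpace X] (μ : Ω → Measure X)
    (hμ : ∀ ω, IsProbabilityMeasure (μ ω)) (F : Ω × X → ℝ) (hF : Measurable F) (C : ℝ)
    (hC : ∀ z, |F z| ≤ C) :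
    ∫ z, F z ∂(jointP p μ) = ∑ ω, p ω * ∫ x, F (ω, x) ∂(μ ω) := by
  have : ∀ ω, IsFiniteMeasure (ENNReal.ofReal (p ω) • ((Measure.dirac ω).prod (μ ω))) :=
    fun ω => Measure.smul_finite _ (by simp)
  unfold jointP
  rw [integral_finsetSum_measure]
  · refine Finset.sum_congr rfl fun ω _ => ?_
    rw [integral_smul_measure, Measure.dirac_prod,
      integral_map measurable_prodMk_left.aemeasurable hF.aestronglyMeasurable,
      ENNReal.toReal_ofReal (hp ω).le, smul_eq_mul]
  · intro ω _
    exact Integrable.of_bound hF.aestronglyMeasurable C (Filter.Eventually.of_forall hC)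

lemma belief_nonneg {Ω : Type} [Fintype Ω] (x : Belief Ω) (ω : Ω) : 0 ≤ x.1 ω := x.2.1 ω

lemma belief_le_one {Ω : Type} [Fintype Ω] (x : Belief Ω) (ω : Ω) : x.1 ω ≤ 1 := by
  rw [← x.2.2]
  exact Finset.single_le_sum (fun i _ => x.2.1 i) (Finset.mem_univ ω)

lemma belief_continuous {Ω : Type} [Fintype Ω] (ω : Ω) : Continuous fun x : Belief Ω => x.1 ω :=
  (continuous_apply ω).comp continuous_subtype_val

/-- Both sides of the obedience identity as integrals against the joint law. -/
lemma joint_sides {Ω : Type} [Fintype Ω] [MeasurableSpace Ω] [MeasurableSingletonClass Ω]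
    (p : Ω → ℝ) (hp : ∀ ω, 0 < p ω) (n : ℕ) (μ : Ω → Measure (Fin n → Belief Ω))
    (hμ : ∀ ω, IsProbabilityMeasure (μ ω)) (i : Fin n) (ω' : Ω) (f : Belief Ω → ℝ)
    (hf : Continuous f) :
    (∫ z, Set.indicator {z : Ω × (Fin n → Belief Ω) | z.1 = ω'} (fun _ => (1 : ℝ)) z * f (z.2 i)
        ∂(jointP p μ) = p ω' * ∫ x, f (x i) ∂(μ ω')) ∧
    (∫ z : Ω × (Fin n → Belief Ω), (z.2 i).1 ω' * f (z.2 i) ∂(jointP p μ) =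
      ∑ ω, p ω * ∫ x, (x i).1 ω' * f (x i) ∂(μ ω)) := by
  classical
  obtain ⟨C, hC⟩ := isCompact_univ.exists_bound_of_continuousOn hf.continuousOn
  have hC' : ∀ x, |f x| ≤ C := fun x => hC x (Set.mem_univ x)
  have hfm : Measurable fun z : Ω × (Fin n → Belief Ω) => f (z.2 i) :=
    hf.measurable.comp ((measurable_pi_apply i).comp measurable_snd)
  have hS : MeasurableSet {z : Ω × (Fin n → Belief Ω) | z.1 = ω'} :=
    measurable_fst (measurableSet_singleton ω')
  constructor
  · rw [integral_jointP p hp μ hμ (fun z => Set.indicator {z : Ω × (Fin n → Belief Ω) | z.1 = ω'}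
      (fun _ => (1 : ℝ)) z * f (z.2 i)) ((measurable_const.indicator hS).mul hfm) C]
    · rw [Finset.sum_eq_single ω']
      · simp
      · intro ω _ h
        simp [h]
      · simp
    · intro z
      by_cases h : z.1 = ω'
      · simpa [Set.indicator, h] using hC' _
      · simpa [Set.indicator, h] using (abs_nonneg _).trans (hC' (z.2 i))
  · refine integral_jointP p hp μ hμ _ (Measurable.mul ?_ hfm) C ?_
    · exact (belief_continuous ω').measurable.comp ((measurable_pi_apply i).comp measurable_snd)
    · intro z
      rw [abs_mul, abs_of_nonneg (belief_nonneg _ _)]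
      have h1 := belief_le_one (z.2 i) ω'
      have h2 := hC' (z.2 i)
      nlinarith [abs_nonneg (f (z.2 i))]

lemma feasible_of_identity {Ω : Type} [Fintype Ω] [MeasurableSpace Ω] [MeasurableSingletonClass Ω]
    (p : Ω → ℝ) (hp : ∀ ω, 0 < p ω) (n : ℕ) (μ : Ω → Measure (Fin n → Belief Ω))
    (hμ : ∀ ω, IsProbabilityMeasure (μ ω))
    (H : ∀ (i : Fin n) (ω' : Ω) (f : Belief Ω → ℝ), Continuous f →
      p ω' * ∫ x, f (x i) ∂(μ ω') = ∑ ω, p ω * ∫ x, (x i).1 ω' * f (x i) ∂(μ ω)) :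
    Feasible p n μ := by
  have := isFiniteMeasure_jointP p μ hμ
  refine ⟨hμ, fun i ω' => ?_⟩
  have hT : Measurable fun z : Ω × (Fin n → Belief Ω) => z.2 i :=
    (measurable_pi_apply i).comp measurable_snd
  have hS : MeasurableSet {z : Ω × (Fin n → Belief Ω) | z.1 = ω'} :=
    measurable_fst (measurableSet_singleton ω')
  refine condExp_of_continuous (jointP p μ) _ hT _ _ (measurable_const.indicator hS)
    ((belief_continuous ω').measurable.comp hT) ?_ ?_ (fun z => belief_nonneg _ _)
    (fun z => belief_le_one _ _) ?_ ?_
  · exact fun z => Set.indicator_nonneg (fun _ _ => zero_le_one) z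
  · exact fun z => Set.indicator_le_self' (fun _ _ => zero_le_one) z
  · exact (belief_continuous ω').measurable.comp (comap_measurable _)
  · intro f hf _
    obtain ⟨h1, h2⟩ := joint_sides p hp n μ hμ i ω' f hf
    rw [h1, h2, H i ω' f hf]

lemma identity_of_feasible {Ω : Type} [Fintype Ω] [MeasurableSpace Ω] [MeasurableSingletonClass Ω]
    (p : Ω → ℝ) (hp : ∀ ω, 0 < p ω) (n : ℕ) (μ : Ω → Measure (Fin n → Belief Ω))
    (hμ : Feasible p n μ) (i : Fin n) (ω' : Ω) (f : Belief Ω → ℝ) (hf : Continuous f) :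
    p ω' * ∫ x, f (x i) ∂(μ ω') = ∑ ω, p ω * ∫ x, (x i).1 ω' * f (x i) ∂(μ ω) := by
  obtain ⟨hμ, h⟩ := hμ
  have := isFiniteMeasure_jointP p μ hμ
  obtain ⟨h1, h2⟩ := joint_sides p hp n μ hμ i ω' f hf
  rw [← h1, ← h2]
  have hT : Measurable fun z : Ω × (Fin n → Belief Ω) => z.2 i :=
    (measurable_pi_apply i).comp measurable_snd
  have hS : MeasurableSet {z : Ω × (Fin n → Belief Ω) | z.1 = ω'} :=
    measurable_fst (measurableSet_singleton ω')
  obtain ⟨C, hC⟩ := isCompact_univ.exists_bound_of_continuousOn hf.continuousOn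
  have pull := condExp_stronglyMeasurable_mul_of_bound (μ := jointP p μ) hT.comap_le
    (f := fun z => f (z.2 i))
    (g := Set.indicator {z : Ω × (Fin n → Belief Ω) | z.1 = ω'} (fun _ => (1 : ℝ)))
    (hf.measurable.comp (comap_measurable _)).stronglyMeasurable
    ((integrable_const (1 : ℝ)).indicator hS) C
    (Filter.Eventually.of_forall fun z => hC _ (Set.mem_univ _))
  have e := integral_condExp (μ := jointP p μ) hT.comap_le
    (f := (fun z => f (z.2 i)) *
      Set.indicator {z : Ω × (Fin n → Belief Ω) | z.1 = ω'} (fun _ => (1 : ℝ)))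
  calc _ = ∫ z, ((fun z : Ω × (Fin n → Belief Ω) => f (z.2 i)) *
      Set.indicator {z : Ω × (Fin n → Belief Ω) | z.1 = ω'} (fun _ => (1 : ℝ))) z ∂(jointP p μ) := by
        refine integral_congr_ae (Filter.Eventually.of_forall fun z => ?_)
        simp [mul_comm]
    _ = _ := by
        rw [← e]
        refine integral_congr_ae ?_
        filter_upwards [pull, h i ω'] with z h1 h2
        rw [h1, Pi.mul_apply, ← h2, mul_comm]

/-- The set of dual objective values for the payoff `F`. -/
def dualSet {Ω : Type} [Fintype Ω] (p : Ω → ℝ) (n : ℕ) (F : Ω → (Fin n → Belief Ω) → ℝ) : Set ℝ :=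
  { r : ℝ | ∃ (V : Ω → ℝ) (φ : Fin n → Ω → Belief Ω → ℝ),
        (∀ (i : Fin n) (ω : Ω), Continuous (φ i ω)) ∧
        (∀ (ω : Ω) (x : Fin n → Belief Ω), F ω x ≤ V ω + ∑ i : Fin n, φ i ω (x i)) ∧
        (∀ (i : Fin n) (x : Belief Ω), ∑ ω : Ω, x.1 ω * φ i ω x = 0) ∧
        r = ∑ ω : Ω, p ω * V ω }

section
variable {Ω : Type} [Fintype Ω] (p : Ω → ℝ) (n : ℕ)

lemma dualSet_of_le (F : Ω → (Fin n → Belief Ω) → ℝ) (V : Ω → ℝ) (h : ∀ ω x, F ω x ≤ V ω) :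
    ∑ ω, p ω * V ω ∈ dualSet p n F :=
  ⟨V, fun _ _ _ => 0, fun _ _ => continuous_const, by simpa using h, by simp, rfl⟩

lemma dualSet_lower (hp : ∀ ω, 0 < p ω) (hpsum : ∑ ω : Ω, p ω = 1)
    (F : Ω → (Fin n → Belief Ω) → ℝ) : BddBelow (dualSet p n F) := by
  let π : Belief Ω := ⟨p, fun ω => (hp ω).le, hpsum⟩
  refine ⟨∑ ω, p ω * F ω (fun _ => π), ?_⟩
  rintro r ⟨V, φ, -, h1, h2, rfl⟩
  have h3 : ∑ ω, p ω * ∑ i, φ i ω π = 0 := by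
    simp_rw [Finset.mul_sum]
    rw [Finset.sum_comm]
    exact Finset.sum_eq_zero fun i _ => h2 i π
  calc ∑ ω, p ω * F ω (fun _ => π) ≤ ∑ ω, p ω * (V ω + ∑ i, φ i ω π) :=
        Finset.sum_le_sum fun ω _ => mul_le_mul_of_nonneg_left (h1 ω _) (hp ω).le
    _ = _ := by
        simp_rw [mul_add]
        rw [Finset.sum_add_distrib, h3, add_zero]

lemma dualSet_add (F G : Ω → (Fin n → Belief Ω) → ℝ) {r s : ℝ} (hr : r ∈ dualSet p n F)
    (hs : s ∈ dualSet p n G) : r + s ∈ dualSet p n (fun ω x => F ω x + G ω x) := by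
  obtain ⟨V, φ, a1, a2, a3, rfl⟩ := hr
  obtain ⟨W, ψ, b1, b2, b3, rfl⟩ := hs
  refine ⟨fun ω => V ω + W ω, fun i ω x => φ i ω x + ψ i ω x, fun i ω => (a1 i ω).add (b1 i ω),
    ?_, ?_, ?_⟩
  · intro ω x
    rw [Finset.sum_add_distrib]
    linarith [a2 ω x, b2 ω x]
  · intro i x
    simp_rw [mul_add]
    rw [Finset.sum_add_distrib, a3, b3, add_zero]
  · simp_rw [mul_add]
    rw [Finset.sum_add_distrib]

lemma dualSet_smul (F : Ω → (Fin n → Belief Ω) → ℝ) {r c : ℝ} (hc : 0 < c)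
    (hr : r ∈ dualSet p n F) : c * r ∈ dualSet p n (fun ω x => c * F ω x) := by
  obtain ⟨V, φ, a1, a2, a3, rfl⟩ := hr
  refine ⟨fun ω => c * V ω, fun i ω x => c * φ i ω x, fun i ω => continuous_const.mul (a1 i ω),
    ?_, ?_, ?_⟩
  · intro ω x
    rw [← Finset.mul_sum, ← mul_add]
    exact mul_le_mul_of_nonneg_left (a2 ω x) hc.le
  · intro i x
    simp_rw [mul_left_comm _ c]
    rw [← Finset.mul_sum, a3, mul_zero]
  · simp_rw [mul_left_comm _ c]
    rw [← Finset.mul_sum]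

lemma sInf_dualSet_smul (F : Ω → (Fin n → Belief Ω) → ℝ) {c : ℝ} (hc : 0 < c) :
    sInf (dualSet p n (fun ω x => c * F ω x)) = c * sInf (dualSet p n F) := by
  have : dualSet p n (fun ω x => c * F ω x) = (fun r => c * r) '' (dualSet p n F) := by
    ext r
    constructor
    · intro hr
      have := dualSet_smul p n _ (inv_pos.2 hc) hr
      simp only [inv_mul_cancel_left₀ hc.ne'] at this
      exact ⟨_, this, by simp [mul_inv_cancel_left₀ hc.ne']⟩
    · rintro ⟨r, hr, rfl⟩
      exact dualSet_smul p n _ hc hr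
  rw [this]
  exact Real.sInf_smul_of_nonneg hc.le _

variable [MeasurableSpace Ω] [MeasurableSingletonClass Ω]

lemma weak_duality (hp : ∀ ω, 0 < p ω)
    (v : Ω → (Fin n → Belief Ω) → ℝ) (C : ℝ) (hC : ∀ ω x, |v ω x| ≤ C)
    (hvusc : ∀ ω, UpperSemicontinuous (v ω))
    (μ : Ω → Measure (Fin n → Belief Ω)) (hμ : Feasible p n μ) (r : ℝ) (hr : r ∈ dualSet p n v) :
    ∑ ω, p ω * ∫ x, v ω x ∂(μ ω) ≤ r := by
  classical
  obtain ⟨V, φ, a1, a2, a3, rfl⟩ := hr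
  have hid := identity_of_feasible p hp n μ hμ
  have hprob := hμ.1
  have hci : ∀ (ω : Ω) (g : (Fin n → Belief Ω) → ℝ), Continuous g → Integrable g (μ ω) :=
    fun ω g hg => by
      obtain ⟨D, hD⟩ := isCompact_univ.exists_bound_of_continuousOn hg.continuousOn
      exact Integrable.of_bound hg.aestronglyMeasurable D
        (Filter.Eventually.of_forall fun x => hD x (Set.mem_univ x))
  have hφc : ∀ i ω, Continuous fun x : Fin n → Belief Ω => φ i ω (x i) :=
    fun i ω => (a1 i ω).comp (continuous_apply i)
  have hxc : ∀ (i : Fin n) ω, Continuous fun x : Fin n → Belief Ω => (x i).1 ω :=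
    fun i ω => (belief_continuous ω).comp (continuous_apply i)
  have hzero : ∀ i, ∑ ω', p ω' * ∫ x, φ i ω' (x i) ∂(μ ω') = 0 := by
    intro i
    calc _ = ∑ ω', ∑ ω, p ω * ∫ x, (x i).1 ω' * φ i ω' (x i) ∂(μ ω) :=
          Finset.sum_congr rfl fun ω' _ => hid i ω' _ (a1 i ω')
      _ = ∑ ω, p ω * ∫ x, ∑ ω', (x i).1 ω' * φ i ω' (x i) ∂(μ ω) := by
          rw [Finset.sum_comm]
          refine Finset.sum_congr rfl fun ω _ => ?_
          rw [integral_finsetSum _ fun ω' _ => hci ω (fun x => (x i).1 ω' * φ i ω' (x i))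
              ((hxc i ω').mul (hφc i ω')),
            Finset.mul_sum]
      _ = 0 := by simp [a3]
  have hle : ∀ ω, ∫ x, v ω x ∂(μ ω) ≤ V ω + ∑ i, ∫ x, φ i ω (x i) ∂(μ ω) := by
    intro ω
    have hvi : Integrable (v ω) (μ ω) := Integrable.of_bound
      (hvusc ω).measurable.aestronglyMeasurable C (Filter.Eventually.of_forall (hC ω))
    have hs : Integrable (fun x => ∑ i, φ i ω (x i)) (μ ω) :=
      hci ω _ (continuous_finsetSum _ fun i _ => hφc i ω)
    calc _ ≤ ∫ x, (V ω + ∑ i, φ i ω (x i)) ∂(μ ω) :=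
          integral_mono hvi ((integrable_const _).add hs) (a2 ω)
      _ = _ := by
          rw [integral_add (integrable_const _) hs,
            integral_finsetSum _ fun i _ => hci ω _ (hφc i ω)]
          simp
  calc _ ≤ ∑ ω, p ω * (V ω + ∑ i, ∫ x, φ i ω (x i) ∂(μ ω)) :=
        Finset.sum_le_sum fun ω _ => mul_le_mul_of_nonneg_left (hle ω) (hp ω).le
    _ = _ := by
        simp_rw [mul_add, Finset.mul_sum]
        rw [Finset.sum_add_distrib, Finset.sum_comm (s := Finset.univ (α := Ω))]
        simp [hzero]

lemma strong_duality [Nonempty Ω] (hp : ∀ ω, 0 < p ω) (hpsum : ∑ ω : Ω, p ω = 1)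
    (v : Ω → (Fin n → Belief Ω) → ℝ) (C : ℝ) (hC : ∀ ω x, |v ω x| ≤ C)
    (hvusc : ∀ ω, UpperSemicontinuous (v ω)) :
    ∃ μ : Ω → Measure (Fin n → Belief Ω), Feasible p n μ ∧
      sInf (dualSet p n v) ≤ ∑ ω, p ω * ∫ x, v ω x ∂(μ ω) := by
  classical
  let F : (Ω → C(Fin n → Belief Ω, ℝ)) × ℝ → Ω → (Fin n → Belief Ω) → ℝ := fun e ω x => e.1 ω x + e.2 * v ω x
  let N : (Ω → C(Fin n → Belief Ω, ℝ)) × ℝ → ℝ := fun e => sInf (dualSet p n (F e))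
  have hlow : ∀ e, BddBelow (dualSet p n (F e)) := fun e => dualSet_lower p n hp hpsum _
  have hne : ∀ e, (dualSet p n (F e)).Nonempty := by
    intro e
    refine ⟨_, dualSet_of_le p n (F e) (fun ω => ‖e.1 ω‖ + |e.2| * C) fun ω x => ?_⟩
    have h1 : e.1 ω x ≤ ‖e.1 ω‖ := (le_abs_self _).trans ((e.1 ω).norm_coe_le_norm x)
    have h2 : e.2 * v ω x ≤ |e.2| * C := by
      refine (le_abs_self _).trans ?_
      rw [abs_mul]
      exact mul_le_mul_of_nonneg_left (hC ω x) (abs_nonneg _)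
    exact add_le_add h1 h2
  have hNhom : ∀ c : ℝ, 0 < c → ∀ e, N (c • e) = c * N e := by
    intro c hc e
    have : F (c • e) = fun ω x => c * F e ω x := by
      ext ω x
      simp [F]; ring
    simp only [N, this]
    exact sInf_dualSet_smul p n _ hc
  have hNadd : ∀ e e', N (e + e') ≤ N e + N e' := by
    intro e e'
    have : F (e + e') = fun ω x => F e ω x + F e' ω x := by
      ext ω x
      simp [F]; ring
    have h : ∀ r ∈ dualSet p n (F e), ∀ s ∈ dualSet p n (F e'), N (e + e') ≤ r + s := by
      intro r hr s hs
      refine csInf_le (hlow _) ?_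
      rw [this]
      exact dualSet_add p n _ _ hr hs
    have h1 : N (e + e') - N e ≤ N e' := by
      refine le_csInf (hne e') fun s hs => ?_
      have : N (e + e') - s ≤ N e := le_csInf (hne e) fun r hr => by linarith [h r hr s hs]
      linarith
    linarith
  obtain ⟨L, hLN, hLv⟩ := hahn_banach_point N hNhom hNadd (0, 1) (by simp [Prod.ext_iff])
  have hLle : ∀ (e : (Ω → C(Fin n → Belief Ω, ℝ)) × ℝ) (V : Ω → ℝ), (∀ ω x, F e ω x ≤ V ω) → L e ≤ ∑ ω, p ω * V ω :=
    fun e V h => (hLN e).trans (csInf_le (hlow e) (dualSet_of_le p n _ V h))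
  -- the functional for each state
  let Lω : Ω → C(Fin n → Belief Ω, ℝ) →ₗ[ℝ] ℝ := fun ω =>
    (p ω)⁻¹ • (L ∘ₗ LinearMap.inl ℝ _ _ ∘ₗ LinearMap.single ℝ _ ω)
  have hLω : ∀ ω f, p ω * Lω ω f = L (Pi.single ω f, 0) := by
    intro ω f
    simp [Lω, mul_inv_cancel_left₀ (hp ω).ne']
  have hLsum : ∀ g : Ω → C(Fin n → Belief Ω, ℝ), L (g, 0) = ∑ ω, p ω * Lω ω (g ω) := by
    intro g
    simp_rw [hLω]
    rw [← map_sum]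
    congr 1
    refine Prod.ext ?_ ?_
    · rw [Prod.fst_sum]
      exact (Finset.univ_sum_single g).symm
    · rw [Prod.snd_sum]; simp
  have hLpos : ∀ ω f, 0 ≤ f → 0 ≤ Lω ω f := by
    intro ω f hf
    have h := hLle (Pi.single ω (-f), 0) 0 (by
      intro ω' x
      by_cases h : ω' = ω
      · subst h
        have : 0 ≤ f x := hf x
        simpa [F] using this
      · simp [F, h])
    rw [← hLω, map_neg] at h
    simp at h
    exact nonneg_of_mul_nonneg_right h (hp ω)
  have hLone : ∀ ω, Lω ω 1 = 1 := by
    intro ω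
    have h1 := hLle (Pi.single ω 1, 0) (Pi.single ω 1) (by
      intro ω' x
      by_cases h : ω' = ω
      · subst h; simp [F]
      · simp [F, h])
    have h2 := hLle (Pi.single ω (-1), 0) (Pi.single ω (-1)) (by
      intro ω' x
      by_cases h : ω' = ω
      · subst h; simp [F]
      · simp [F, h])
    rw [← hLω] at h1 h2
    rw [map_neg] at h2
    simp [Pi.single_apply] at h1 h2
    have := hp ω
    apply le_antisymm
    · by_contra hh
      push Not at hh
      nlinarith
    · by_contra hh
      push Not at hh
      nlinarith
  choose μ hμp hμ using fun ω => riesz_prob (Lω ω) (hLpos ω) (hLone ω)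
  have hfeas : Feasible p n μ := by
    refine feasible_of_identity p hp n μ hμp fun i ω' f hf => ?_
    have hci : ∀ (ω : Ω) (g : (Fin n → Belief Ω) → ℝ), Continuous g → Integrable g (μ ω) :=
      fun ω g hg => by
        obtain ⟨D, hD⟩ := isCompact_univ.exists_bound_of_continuousOn hg.continuousOn
        exact Integrable.of_bound hg.aestronglyMeasurable D
          (Filter.Eventually.of_forall fun x => hD x (Set.mem_univ x))
    let ψ : ℝ → Ω → Belief Ω → ℝ := fun s ω x => s * ((if ω = ω' then f x else 0) - x.1 ω' * f x)
    have hψc : ∀ s ω, Continuous (ψ s ω) := by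
      intro s ω
      refine continuous_const.mul (Continuous.sub ?_ ((belief_continuous ω').mul hf))
      by_cases h : ω = ω'
      · simpa [h] using hf
      · simpa [h] using continuous_const
    have hψ0 : ∀ s x, ∑ ω, x.1 ω * ψ s ω x = 0 := by
      intro s x
      have e1 : ∀ ω, x.1 ω * ψ s ω x =
          s * (if ω = ω' then x.1 ω * f x else 0) - x.1 ω * (s * x.1 ω' * f x) := by
        intro ω
        by_cases h : ω = ω'
        · simp only [ψ, h, if_true]; ring
        · simp only [ψ, h, if_false]; ring
      simp_rw [e1]
      rw [Finset.sum_sub_distrib, ← Finset.mul_sum, ← Finset.sum_mul, x.2.2]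
      simp; ring
    let G : ℝ → Ω → C(Fin n → Belief Ω, ℝ) := fun s ω =>
      ⟨fun x => ψ s ω (x i), (hψc s ω).comp (continuous_apply i)⟩
    have hG : ∀ s, L (G s, 0) ≤ 0 := by
      intro s
      refine (hLN _).trans (csInf_le (hlow _) ?_)
      refine ⟨0, fun j => if j = i then ψ s else 0, ?_, ?_, ?_, by simp⟩
      · intro j ω
        by_cases h : j = i
        · simpa [h] using hψc s ω
        · simp only [h, if_false]
          exact continuous_const
      · intro ω x
        rw [Finset.sum_eq_single i]
        · simp [F, G]
        · intro j _ h; simp [h]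
        · simp
      · intro j x
        by_cases h : j = i
        · simpa [h] using hψ0 s x
        · simp [h]
    have hval : ∀ s, L (G s, 0) = s * (p ω' * ∫ x, f (x i) ∂(μ ω') -
        ∑ ω, p ω * ∫ x, (x i).1 ω' * f (x i) ∂(μ ω)) := by
      intro s
      rw [hLsum]
      simp_rw [← hμ]
      have e2 : ∀ ω, p ω * ∫ x, G s ω x ∂(μ ω) =
          s * ((if ω = ω' then p ω * ∫ x, f (x i) ∂(μ ω) else 0) -
            p ω * ∫ x, (x i).1 ω' * f (x i) ∂(μ ω)) := by
        intro ω
        have e3 : ∀ x, G s ω x = s * ((if ω = ω' then f (x i) else 0) - (x i).1 ω' * f (x i)) :=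
          fun x => rfl
        have i1 := hci ω _ (hf.comp (continuous_apply i))
        have i2 := hci ω (fun x => (x i).1 ω' * f (x i)) (((belief_continuous ω').mul hf).comp (continuous_apply i))
        simp only [Function.comp_def] at i1 i2
        simp_rw [e3]
        rw [integral_const_mul]
        by_cases h : ω = ω'
        · simp only [h, if_true] at *
          rw [integral_sub i1 i2]; ring
        · simp only [h, if_false, zero_sub]
          rw [integral_neg]; ring
      rw [Finset.sum_congr rfl fun ω _ => e2 ω, ← Finset.mul_sum, Finset.sum_sub_distrib]
      simp
    have a := hG 1
    have b := hG (-1)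
    rw [hval] at a b
    linarith
  refine ⟨μ, hfeas, ?_⟩
  have hX : Nonempty (Fin n → Belief Ω) := ⟨fun _ => ⟨p, fun ω => (hp ω).le, hpsum⟩⟩
  choose g hg1 hg2 hg3 using fun ω => usc_approx (v ω) C (hC ω) (hvusc ω)
  have hLv' : sInf (dualSet p n v) = L (0, 1) := by
    rw [hLv]
    have : F (0, 1) = v := by ext ω x; simp [F]
    simp only [N, this]
  have hk : ∀ k, sInf (dualSet p n v) ≤ ∑ ω, p ω * ∫ x, g ω k x ∂(μ ω) := by
    intro k
    have h1 := hLle (-(fun ω => g ω k), 1) 0 (by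
      intro ω x
      simpa [F] using hg1 ω k x)
    have h2 : L (-(fun ω => g ω k), 1) = L (0, 1) - L ((fun ω => g ω k), 0) := by
      rw [← map_sub]; congr 1; simp
    rw [h2, ← hLv', hLsum] at h1
    simp_rw [← hμ] at h1
    simpa using h1
  refine ge_of_tendsto' (x := Filter.atTop) ?_ hk
  refine tendsto_finsetSum _ fun ω _ => Filter.Tendsto.const_mul _ ?_
  refine tendsto_integral_of_dominated_convergence (fun _ => C)
    (fun k => (g ω k).continuous.aestronglyMeasurable) (integrable_const _)
    (fun k => Filter.Eventually.of_forall (hg2 ω k)) (Filter.Eventually.of_forall (hg3 ω))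

end

/-- dual value representation (Proposition `prop_dual value representation`). -/
theorem value_eq_inf_dual
    {Ω : Type} [Fintype Ω] [Nonempty Ω] [MeasurableSpace Ω] [MeasurableSingletonClass Ω]
    (p : Ω → ℝ) (hp : ∀ ω, 0 < p ω) (hpsum : ∑ ω : Ω, p ω = 1)
    (n : ℕ) (hn : 1 ≤ n)
    (v : Ω → (Fin n → Belief Ω) → ℝ)
    (hvb : ∃ C : ℝ, ∀ ω x, |v ω x| ≤ C)
    (hvusc : ∀ ω, UpperSemicontinuous (v ω)) :
    Val p n v =
      sInf { r : ℝ | ∃ (V : Ω → ℝ) (φ : Fin n → Ω → Belief Ω → ℝ),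
        (∀ (i : Fin n) (ω : Ω), Continuous (φ i ω)) ∧
        (∀ (ω : Ω) (x : Fin n → Belief Ω), v ω x ≤ V ω + ∑ i : Fin n, φ i ω (x i)) ∧
        (∀ (i : Fin n) (x : Belief Ω), ∑ ω : Ω, x.1 ω * φ i ω x = 0) ∧
        r = ∑ ω : Ω, p ω * V ω } := by
  obtain ⟨C, hC⟩ := hvb
  obtain ⟨μ, hμ, hle⟩ := strong_duality p n hp hpsum v C hC hvusc
  have hweak := weak_duality p n hp v C hC hvusc
  have hne : (dualSet p n v).Nonempty :=
    ⟨_, dualSet_of_le p n v (fun _ => C) fun ω x => (abs_le.1 (hC ω x)).2⟩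
  obtain ⟨r₀, hr₀⟩ := hne
  show Val p n v = sInf (dualSet p n v)
  unfold Val
  apply le_antisymm
  · refine csSup_le ⟨_, μ, hμ, rfl⟩ ?_
    rintro _ ⟨μ', hμ', rfl⟩
    exact le_csInf ⟨r₀, hr₀⟩ fun r hr => hweak μ' hμ' r hr
  · refine hle.trans (le_csSup ⟨r₀, ?_⟩ ⟨μ, hμ, rfl⟩)
    rintro _ ⟨μ', hμ', rfl⟩
    exact hweak μ' hμ' r₀ hr₀
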